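/- For any k ≥ 2, there is a constant C_k such that for any n ≥ C_k, there exists a k-uniform n-vertex hypergraph H with maximum degree at most C_k·n whose 4-color Ramsey number is at least tw_k(n/C_k). -/

import Mathlib

noncomputable section

/-- The tower function over the reals: `tw 1 x = x` and `tw k x = 2 ^ (tw (k-1) x)`
for `k ≥ 2`. -/
def twR : ℕ → ℝ → ℝ
  | 0, x => x
  | 1, x => x
  | (k + 2), x => (2 : ℝ) ^ twR (k + 1) x

/-- `arrowsProp n N q E` says that every `q`-coloring of the subsets of an `N`-element
set yields a monochromatic copy of the hypergraph on `[n]` with edge set `E`. -/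
def arrowsProp (n N q : ℕ) (E : Finset (Finset (Fin n))) : Prop :=
  ∀ χ : Finset (Fin N) → Fin q, ∃ f : Fin n ↪ Fin N, ∃ i : Fin q,
    ∀ e ∈ E, χ (e.map f) = i

/-- The `q`-color Ramsey number of the hypergraph on `[n]` with edge set `E`: the least `N`
such that every `q`-coloring of the subsets of an `N`-element set contains a monochromatic
copy. -/
def ramseyNumber (n q : ℕ) (E : Finset (Finset (Fin n))) : ℕ :=
  sInf {N | arrowsProp n N q E}


/-! ### Finite Ramsey theorem -/

theorem ramsey_fin (q : ℕ) (k : ℕ) : ∀ n : ℕ, ∃ N : ℕ, ∀ (α : Type) [LinearOrder α]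
    (χ : Finset α → Fin (q+1)) (X : Finset α), N ≤ X.card →
    ∃ Y ⊆ X, n ≤ Y.card ∧ ∃ c, ∀ e ⊆ Y, e.card = k → χ e = c := by
  induction k with
  | zero =>
    intro n
    refine ⟨n, fun α _ χ X hX => ⟨X, subset_rfl, hX, χ ∅, ?_⟩⟩
    intro e _ he
    rw [Finset.card_eq_zero.mp he]
  | succ k ih =>
    have pre : ∀ L : ℕ, ∃ N : ℕ, ∀ (α : Type) [LinearOrder α]
        (χ : Finset α → Fin (q+1)) (X : Finset α), N ≤ X.card →
        ∃ Y ⊆ X, L ≤ Y.card ∧ ∃ g : α → Fin (q+1), ∀ e ⊆ Y, e.card = k + 1 →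
          ∀ x ∈ e, (∀ y ∈ e, x ≤ y) → χ e = g x := by
      intro L
      induction L with
      | zero =>
        refine ⟨0, fun α _ χ X hX => ⟨∅, by simp, by simp, fun _ => 0, ?_⟩⟩
        intro e he hc
        rw [Finset.subset_empty.mp he] at hc
        simp at hc
      | succ L ihL =>
        obtain ⟨N1, hN1⟩ := ihL
        obtain ⟨N2, hN2⟩ := ih N1
        refine ⟨N2 + 1, fun α _ χ X hX => ?_⟩
        have hne : X.Nonempty := Finset.card_pos.mp (by omega)
        set x := X.min' hne with hx
        have hxX : x ∈ X := Finset.min'_mem _ _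
        obtain ⟨X', hX', hc', c, hc⟩ := hN2 α (fun e => χ (insert x e)) (X.erase x)
          (by rw [Finset.card_erase_of_mem hxX]; omega)
        obtain ⟨Y, hY, hYc, g, hg⟩ := hN1 α χ X' hc'
        have hlt : ∀ y ∈ Y, x < y := by
          intro y hy
          have h1 := hX' (hY hy)
          rw [Finset.mem_erase] at h1
          exact lt_of_le_of_ne (Finset.min'_le _ _ h1.2) (Ne.symm h1.1)
        have hxY : x ∉ Y := fun h => lt_irrefl _ (hlt x h)
        refine ⟨insert x Y, ?_, ?_, fun z => if z = x then c else g z, ?_⟩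
        · intro z hz
          rcases Finset.mem_insert.mp hz with rfl | hz
          · exact hxX
          · exact Finset.mem_of_mem_erase (hX' (hY hz))
        · rw [Finset.card_insert_of_notMem hxY]; omega
        · intro e he hec z hz hmin
          by_cases hxe : x ∈ e
          · have hzx : z = x := by
              rcases Finset.mem_insert.mp (he hz) with h | h
              · exact h
              · exact absurd (hmin x hxe) (not_le.mpr (hlt z h))
            simp only [hzx, if_true]
            rw [← Finset.insert_erase hxe]
            apply hc
            · intro w hw
              rw [Finset.mem_erase] at hw
              rcases Finset.mem_insert.mp (he hw.2) with h | h
              · exact absurd h hw.1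
              · exact hY h
            · rw [Finset.card_erase_of_mem hxe]; omega
          · have hzx : z ≠ x := fun h => hxe (h ▸ hz)
            simp only [hzx, if_false]
            refine hg e ?_ hec z hz hmin
            intro w hw
            rcases Finset.mem_insert.mp (he hw) with h | h
            · exact absurd (h ▸ hw) hxe
            · exact h
    intro n
    obtain ⟨N, hN⟩ := pre ((q+1) * n)
    refine ⟨N, fun α _ χ X hX => ?_⟩
    obtain ⟨Y, hY, hYc, g, hg⟩ := hN α χ X hX
    obtain ⟨c, -, hc⟩ := Finset.exists_le_card_fiber_of_mul_le_card_of_maps_to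
      (s := Y) (t := (Finset.univ : Finset (Fin (q+1)))) (f := g) (n := n)
      (fun _ _ => Finset.mem_univ _) Finset.univ_nonempty (by simpa using hYc)
    refine ⟨Y.filter (fun y => g y = c), (Finset.filter_subset _ _).trans hY, hc, c, ?_⟩
    intro e he hec
    have hne : e.Nonempty := Finset.card_pos.mp (by omega)
    have hm := Finset.min'_mem e hne
    rw [hg e (he.trans (Finset.filter_subset _ _)) hec _ hm (fun y hy => Finset.min'_le _ _ hy)]
    exact (Finset.mem_filter.mp (he hm)).2

/-! ### Combinatorics of splitting levels -/

/-- Abstract properties of the splitting level of two leaves of a binary tree. -/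
structure Ultra {α : Type} [LinearOrder α] (δ : α → α → ℕ) : Prop where
  symm : ∀ a b, δ a b = δ b a
  ne : ∀ a b c, a < b → b < c → δ a b ≠ δ b c
  mx : ∀ a b c, a < b → b < c → δ a c = max (δ a b) (δ b c)

theorem Ultra.dual {α : Type} [LinearOrder α] {δ : α → α → ℕ} (h : Ultra δ) :
    Ultra (α := αᵒᵈ) δ where
  symm := h.symm
  ne a b c hab hbc := by
    have := h.ne c b a hbc hab
    rw [h.symm c b, h.symm b a] at this
    exact fun h' => this h'.symm
  mx a b c hab hbc := by
    have := h.mx c b a hbc hab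
    rw [h.symm c b, h.symm b a, h.symm c a, max_comm] at this
    exact this

theorem drop_top {α : Type} [LinearOrder α] (r : ℕ) : ∀ X : Finset α,
    ∃ Y ⊆ X, X.card ≤ Y.card + r ∧ ∀ y ∈ Y, ∃ Z ⊆ X, Z.card = r ∧ ∀ z ∈ Z, y < z := by
  induction r with
  | zero => exact fun X => ⟨X, subset_rfl, le_rfl, fun y _ => ⟨∅, by simp, by simp, by simp⟩⟩
  | succ r ih =>
    intro X
    rcases X.eq_empty_or_nonempty with rfl | hne
    · exact ⟨∅, by simp, by simp, by simp⟩
    obtain ⟨Y, hY, hc, h⟩ := ih (X.erase (X.max' hne))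
    have hM := Finset.max'_mem X hne
    rw [Finset.card_erase_of_mem hM] at hc
    refine ⟨Y, hY.trans (Finset.erase_subset _ _), by omega, ?_⟩
    intro y hy
    obtain ⟨Z, hZ, hZc, hZy⟩ := h y hy
    have hMZ : X.max' hne ∉ Z := fun h => (Finset.mem_erase.mp (hZ h)).1 rfl
    refine ⟨insert (X.max' hne) Z, ?_, ?_, ?_⟩
    · intro z hz
      rcases Finset.mem_insert.mp hz with rfl | hz
      · exact hM
      · exact Finset.mem_of_mem_erase (hZ hz)
    · rw [Finset.card_insert_of_notMem hMZ, hZc]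
    · intro z hz
      rcases Finset.mem_insert.mp hz with rfl | hz
      · have h1 := Finset.mem_erase.mp (hY hy)
        exact lt_of_le_of_ne (Finset.le_max' _ _ h1.2) h1.1
      · exact hZy z hz

theorem drop_two_top {α : Type} [LinearOrder α] (X : Finset α) :
    ∃ Y ⊆ X, X.card ≤ Y.card + 2 ∧ ∀ y ∈ Y, ∃ a ∈ X, ∃ b ∈ X, y < a ∧ a < b := by
  obtain ⟨Y, hY, hc, h⟩ := drop_top 2 X
  refine ⟨Y, hY, hc, fun y hy => ?_⟩
  obtain ⟨Z, hZ, hZc, hZy⟩ := h y hy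
  obtain ⟨a, b, hab, rfl⟩ := Finset.card_eq_two.mp hZc
  have ha : a ∈ ({a, b} : Finset α) := by simp
  have hb : b ∈ ({a, b} : Finset α) := by simp
  rcases lt_or_gt_of_ne hab with h | h
  · exact ⟨a, hZ ha, b, hZ hb, hZy _ ha, h⟩
  · exact ⟨b, hZ hb, a, hZ ha, hZy _ hb, h⟩

theorem drop_two_bot {α : Type} [LinearOrder α] (X : Finset α) :
    ∃ Y ⊆ X, X.card ≤ Y.card + 2 ∧ ∀ y ∈ Y, ∃ a ∈ X, ∃ b ∈ X, a < y ∧ b < a :=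
  drop_two_top (α := αᵒᵈ) X

theorem core {α ι : Type} [LinearOrder α] (δ : α → α → ℕ) (hδ : Ultra δ) (T : ι → Finset α) (s : ℕ)
    (hdis : ∀ i j, i ≠ j → ∀ x, x ∈ T i → x ∉ T j)
    (hcard : ∀ i, s + 1 ≤ (T i).card)
    (hdec : ∀ i j a b c, (a ∈ T i ∨ a ∈ T j) → (b ∈ T i ∨ b ∈ T j) → (c ∈ T i ∨ c ∈ T j) →
      a < b → b < c → δ b c < δ a b) :
    ∃ S : ι → Finset ℕ, (∀ i, s ≤ (S i).card) ∧
      (∀ i j, i ≠ j → ∀ x, x ∈ S i → x ∉ S j) ∧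
      (∀ i, ∀ d ∈ S i, ∃ x ∈ T i, ∃ y ∈ T i, x ≠ y ∧ δ x y = d) ∧
      ∀ i j, ∀ e : Finset ℕ, (∀ d ∈ e, d ∈ S i ∨ d ∈ S j) →
        ∃ e' : Finset α, (∀ x ∈ e', x ∈ T i ∨ x ∈ T j) ∧ e'.card = e.card + 1 ∧
          (∀ d, d ∈ e ↔ ∃ x ∈ e', ∃ y ∈ e', x ≠ y ∧ δ x y = d) := by
  have key : ∀ i j x y z, (x ∈ T i ∨ x ∈ T j) → (y ∈ T i ∨ y ∈ T j) → (z ∈ T i ∨ z ∈ T j) →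
      x < y → x < z → δ x y = δ x z := by
    intro i j x y z hx hy hz hxy hxz
    rcases lt_trichotomy y z with h | h | h
    · rw [hδ.mx x y z hxy h, max_eq_left (hdec i j x y z hx hy hz hxy h).le]
    · rw [h]
    · rw [hδ.mx x z y hxz h, max_eq_left (hdec i j x z y hx hz hy hxz h).le]
  have hne : ∀ i, (T i).Nonempty := fun i => Finset.card_pos.mp (by have := hcard i; omega)
  let m : ι → α := fun i => (T i).max' (hne i)
  have hm : ∀ i, m i ∈ T i := fun i => Finset.max'_mem _ _
  have hlt : ∀ i x, x ∈ T i → x ≠ m i → x < m i := fun i x hx h =>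
    lt_of_le_of_ne (Finset.le_max' _ _ hx) h
  have anti : ∀ i j x y, x ∈ T i → x ≠ m i → y ∈ T j → y ≠ m j → x < y →
      δ y (m j) < δ x (m i) := by
    intro i j x y hx hxm hy hym hxy
    rw [key i j x (m i) y (.inl hx) (.inl (hm i)) (.inr hy) (hlt i x hx hxm) hxy]
    exact hdec i j x y (m j) (.inl hx) (.inr hy) (.inr (hm j)) hxy (hlt j y hy hym)
  have inj : ∀ i j x y, x ∈ T i → x ≠ m i → y ∈ T j → y ≠ m j → δ x (m i) = δ y (m j) →
      x = y := by
    intro i j x y hx hxm hy hym h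
    rcases lt_trichotomy x y with h' | h' | h'
    · have := anti i j x y hx hxm hy hym h'; omega
    · exact h'
    · have := anti j i y x hy hym hx hxm h'; omega
  refine ⟨fun i => ((T i).erase (m i)).image (fun x => δ x (m i)), ?_, ?_, ?_, ?_⟩
  · intro i
    rw [Finset.card_image_of_injOn, Finset.card_erase_of_mem (hm i)]
    · have := hcard i; omega
    · intro x hx y hy h
      have hx := Finset.mem_erase.mp hx
      have hy := Finset.mem_erase.mp hy
      exact inj i i x y hx.2 hx.1 hy.2 hy.1 h
  · intro i j hij d hd hd'
    obtain ⟨x, hx, rfl⟩ := Finset.mem_image.mp hd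
    obtain ⟨y, hy, h⟩ := Finset.mem_image.mp hd'
    have hx := Finset.mem_erase.mp hx
    have hy := Finset.mem_erase.mp hy
    have := inj i j x y hx.2 hx.1 hy.2 hy.1 h.symm
    subst this
    exact hdis i j hij x hx.2 hy.2
  · intro i d hd
    obtain ⟨x, hx, rfl⟩ := Finset.mem_image.mp hd
    have hx := Finset.mem_erase.mp hx
    exact ⟨x, hx.2, m i, hm i, hx.1, rfl⟩
  · intro i j e he
    let M := max (m i) (m j)
    have hM : M ∈ T i ∨ M ∈ T j := by
      rcases max_choice (m i) (m j) with h | h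
      · left; show max (m i) (m j) ∈ _; rw [h]; exact hm i
      · right; show max (m i) (m j) ∈ _; rw [h]; exact hm j
    have hleM : ∀ x, (x ∈ T i ∨ x ∈ T j) → x ≤ M := by
      rintro x (h | h)
      · exact (Finset.le_max' _ _ h).trans (le_max_left _ _)
      · exact (Finset.le_max' _ _ h).trans (le_max_right _ _)
    let e0 := (T i ∪ T j).filter (fun x => x ≠ M ∧ δ x M ∈ e)
    have he0 : ∀ x, x ∈ e0 ↔ (x ∈ T i ∨ x ∈ T j) ∧ x ≠ M ∧ δ x M ∈ e := by
      intro x; simp [e0]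
    have hMe0 : M ∉ e0 := fun h => ((he0 M).mp h).2.1 rfl
    have him : e = e0.image (fun x => δ x M) := by
      ext d
      constructor
      · intro hd
        have : ∃ x, (x ∈ T i ∨ x ∈ T j) ∧ x < M ∧ δ x M = d := by
          rcases he d hd with h | h
          · obtain ⟨x, hx, rfl⟩ := Finset.mem_image.mp h
            have hx := Finset.mem_erase.mp hx
            have h1 := hlt i x hx.2 hx.1
            have h2 : x < M := lt_of_lt_of_le h1 (le_max_left _ _)
            exact ⟨x, .inl hx.2, h2, key i j x M (m i) (.inl hx.2) hM (.inl (hm i)) h2 h1⟩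
          · obtain ⟨x, hx, rfl⟩ := Finset.mem_image.mp h
            have hx := Finset.mem_erase.mp hx
            have h1 := hlt j x hx.2 hx.1
            have h2 : x < M := lt_of_lt_of_le h1 (le_max_right _ _)
            exact ⟨x, .inr hx.2, h2, key i j x M (m j) (.inr hx.2) hM (.inr (hm j)) h2 h1⟩
        obtain ⟨x, hx, hxM, rfl⟩ := this
        exact Finset.mem_image.mpr ⟨x, (he0 x).mpr ⟨hx, hxM.ne, hd⟩, rfl⟩
      · intro hd
        obtain ⟨x, hx, rfl⟩ := Finset.mem_image.mp hd
        exact ((he0 x).mp hx).2.2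
    have hanti : ∀ x y, (x ∈ T i ∨ x ∈ T j) → (y ∈ T i ∨ y ∈ T j) → x < y → y ≠ M →
        δ y M < δ x M := by
      intro x y hx hy hxy hyM
      have hyM' := lt_of_le_of_ne (hleM y hy) hyM
      rw [key i j x M y hx hM hy (hxy.trans hyM') hxy]
      exact hdec i j x y M hx hy hM hxy hyM'
    refine ⟨insert M e0, ?_, ?_, ?_⟩
    · intro x hx
      rcases Finset.mem_insert.mp hx with rfl | hx
      · exact hM
      · exact ((he0 x).mp hx).1
    · rw [Finset.card_insert_of_notMem hMe0]
      congr 1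
      conv_rhs => rw [him]
      rw [Finset.card_image_of_injOn]
      intro x hx y hy h
      have hx := (he0 x).mp hx
      have hy := (he0 y).mp hy
      simp only at h
      rcases lt_trichotomy x y with h' | h' | h'
      · have := hanti x y hx.1 hy.1 h' hy.2.1; omega
      · exact h'
      · have := hanti y x hy.1 hx.1 h' hx.2.1; omega
    · intro d
      have aux : ∀ x y, x ∈ insert M e0 → y ∈ insert M e0 → x < y → δ x y ∈ e := by
        intro x y hx hy hxy
        have hyT : y ∈ T i ∨ y ∈ T j := by
          rcases Finset.mem_insert.mp hy with rfl | hy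
          · exact hM
          · exact ((he0 y).mp hy).1
        have hxM : x < M := lt_of_lt_of_le hxy (hleM y hyT)
        have hx := (he0 x).mp ((Finset.mem_insert.mp hx).resolve_left hxM.ne)
        rw [key i j x y M hx.1 hyT hM hxy hxM]
        exact hx.2.2
      constructor
      · intro hd
        rw [him] at hd
        obtain ⟨x, hx, rfl⟩ := Finset.mem_image.mp hd
        exact ⟨x, Finset.mem_insert_of_mem hx, M, Finset.mem_insert_self _ _,
          ((he0 x).mp hx).2.1, rfl⟩
      · rintro ⟨x, hx, y, hy, hxy, rfl⟩
        rcases lt_or_gt_of_ne hxy with h | h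
        · exact aux x y hx hy h
        · rw [hδ.symm]; exact aux y x hy hx h

/-- Blocks that are decreasing, and whose unions avoid valleys or avoid peaks,
can be trimmed so that unions become decreasing. -/
theorem trim {α ι : Type} [LinearOrder α] (δ : α → α → ℕ) (hδ : Ultra δ) (T : ι → Finset α) (s : ℕ)
    (hcard : ∀ i, s + 2 ≤ (T i).card)
    (hdec : ∀ i a b c, a ∈ T i → b ∈ T i → c ∈ T i → a < b → b < c → δ b c < δ a b)
    (hfree : (∀ i j a b c d, (a ∈ T i ∨ a ∈ T j) → (b ∈ T i ∨ b ∈ T j) → (c ∈ T i ∨ c ∈ T j) →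
        (d ∈ T i ∨ d ∈ T j) → a < b → b < c → c < d → ¬ (δ b c < δ a b ∧ δ b c < δ c d)) ∨
      (∀ i j a b c d, (a ∈ T i ∨ a ∈ T j) → (b ∈ T i ∨ b ∈ T j) → (c ∈ T i ∨ c ∈ T j) →
        (d ∈ T i ∨ d ∈ T j) → a < b → b < c → c < d → ¬ (δ a b < δ b c ∧ δ c d < δ b c))) :
    ∃ T' : ι → Finset α, (∀ i, T' i ⊆ T i) ∧ (∀ i, s ≤ (T' i).card) ∧
      (∀ i j a b c, (a ∈ T' i ∨ a ∈ T' j) → (b ∈ T' i ∨ b ∈ T' j) → (c ∈ T' i ∨ c ∈ T' j) →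
      a < b → b < c → δ b c < δ a b) := by
  rcases hfree with hV | hL
  · choose T' hT' hc h using fun i => drop_two_bot (T i)
    refine ⟨T', hT', fun i => by have := hc i; have := hcard i; omega, ?_⟩
    intro i j x y z hx hy hz hxy hyz
    by_contra hcon
    have hn := hδ.ne x y z hxy hyz
    have hxyz : δ x y < δ y z := by omega
    have sub : ∀ w, (w ∈ T' i ∨ w ∈ T' j) → (w ∈ T i ∨ w ∈ T j) :=
      fun w hw => hw.imp (fun h => hT' i h) (fun h => hT' j h)
    have : ∃ a b, (a ∈ T i ∨ a ∈ T j) ∧ (b ∈ T i ∨ b ∈ T j) ∧ a < x ∧ b < a ∧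
        δ a x < δ b a := by
      rcases hx with hx | hx
      · obtain ⟨a, ha, b, hb, h1, h2⟩ := h i x hx
        exact ⟨a, b, .inl ha, .inl hb, h1, h2, hdec i b a x hb ha (hT' i hx) h2 h1⟩
      · obtain ⟨a, ha, b, hb, h1, h2⟩ := h j x hx
        exact ⟨a, b, .inr ha, .inr hb, h1, h2, hdec j b a x hb ha (hT' j hx) h2 h1⟩
    obtain ⟨a, b, ha, hb, h1, h2, h3⟩ := this
    have hn2 := hδ.ne a x y h1 hxy
    rcases lt_or_gt_of_ne hn2 with h4 | h4
    · exact hV i j b a x y hb ha (sub x hx) (sub y hy) h2 h1 hxy ⟨h3, h4⟩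
    · exact hV i j a x y z ha (sub x hx) (sub y hy) (sub z hz) h1 hxy hyz ⟨h4, hxyz⟩
  · choose T' hT' hc h using fun i => drop_two_top (T i)
    refine ⟨T', hT', fun i => by have := hc i; have := hcard i; omega, ?_⟩
    intro i j x y z hx hy hz hxy hyz
    by_contra hcon
    have hn := hδ.ne x y z hxy hyz
    have hxyz : δ x y < δ y z := by omega
    have sub : ∀ w, (w ∈ T' i ∨ w ∈ T' j) → (w ∈ T i ∨ w ∈ T j) :=
      fun w hw => hw.imp (fun h => hT' i h) (fun h => hT' j h)
    have : ∃ a b, (a ∈ T i ∨ a ∈ T j) ∧ (b ∈ T i ∨ b ∈ T j) ∧ z < a ∧ a < b ∧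
        δ a b < δ z a := by
      rcases hz with hz | hz
      · obtain ⟨a, ha, b, hb, h1, h2⟩ := h i z hz
        exact ⟨a, b, .inl ha, .inl hb, h1, h2, hdec i z a b (hT' i hz) ha hb h1 h2⟩
      · obtain ⟨a, ha, b, hb, h1, h2⟩ := h j z hz
        exact ⟨a, b, .inr ha, .inr hb, h1, h2, hdec j z a b (hT' j hz) ha hb h1 h2⟩
    obtain ⟨a, b, ha, hb, h1, h2, h3⟩ := this
    have hn2 := hδ.ne y z a hyz h1
    rcases lt_or_gt_of_ne hn2 with h4 | h4
    · exact hL i j y z a b (sub y hy) (sub z hz) ha hb hyz h1 h2 ⟨h4, h3⟩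
    · exact hL i j x y z a (sub x hx) (sub y hy) (sub z hz) ha hxy hyz h1 ⟨hxyz, h4⟩

/-! ### The concrete splitting level -/

theorem lvl_exists (a b : ℕ) : ∃ i, a / 2 ^ (i+1) = b / 2 ^ (i+1) := by
  refine ⟨a + b, ?_⟩
  have h : a + b + 1 < 2 ^ (a + b + 1) := Nat.lt_two_pow_self
  rw [Nat.div_eq_of_lt (by omega), Nat.div_eq_of_lt (by omega)]

/-- The highest bit in which `a` and `b` differ. -/
def lvl (a b : ℕ) : ℕ := Nat.find (lvl_exists a b)

theorem lvl_le_iff (a b i : ℕ) : lvl a b ≤ i ↔ a / 2 ^ (i+1) = b / 2 ^ (i+1) := by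
  constructor
  · intro h
    have h1 : a / 2 ^ (lvl a b + 1) = b / 2 ^ (lvl a b + 1) := Nat.find_spec (lvl_exists a b)
    obtain ⟨r, rfl⟩ := Nat.exists_eq_add_of_le h
    have : lvl a b + r + 1 = (lvl a b + 1) + r := by ring
    rw [this, pow_add, ← Nat.div_div_eq_div_mul, ← Nat.div_div_eq_div_mul, h1]
  · intro h
    exact Nat.find_min' _ h

theorem lvl_ultra : Ultra lvl where
  symm a b := by
    apply le_antisymm
    · rw [lvl_le_iff]; exact ((lvl_le_iff b a _).mp le_rfl).symm
    · rw [lvl_le_iff]; exact ((lvl_le_iff a b _).mp le_rfl).symm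
  ne a b c hab hbc h := by
    have h1 := (lvl_le_iff a b _).mp le_rfl
    have h2 := (lvl_le_iff b c _).mp le_rfl
    rw [← h] at h2
    rcases Nat.eq_zero_or_pos (lvl a b) with h0 | h0
    · rw [h0] at h1 h2
      omega
    · obtain ⟨r, hr⟩ : ∃ r, lvl a b = r + 1 := ⟨lvl a b - 1, by omega⟩
      have n1 : ¬ lvl a b ≤ r := by omega
      have n2 : ¬ lvl b c ≤ r := by omega
      rw [lvl_le_iff] at n1 n2
      rw [hr, pow_succ _ (r+1), ← Nat.div_div_eq_div_mul, ← Nat.div_div_eq_div_mul] at h1 h2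
      have l1 := Nat.div_le_div_right (c := 2 ^ (r+1)) hab.le
      have l2 := Nat.div_le_div_right (c := 2 ^ (r+1)) hbc.le
      omega
  mx a b c hab hbc := by
    have : ∀ i, lvl a c ≤ i ↔ max (lvl a b) (lvl b c) ≤ i := by
      intro i
      rw [max_le_iff, lvl_le_iff, lvl_le_iff, lvl_le_iff]
      have l1 := Nat.div_le_div_right (c := 2 ^ (i+1)) hab.le
      have l2 := Nat.div_le_div_right (c := 2 ^ (i+1)) hbc.le
      omega
    exact le_antisymm ((this _).mpr le_rfl) ((this _).mp le_rfl)

theorem lvl_lt (a b N : ℕ) (ha : a < 2 ^ N) (hb : b < 2 ^ N) (hab : a ≠ b) : lvl a b < N := by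
  rcases N with _ | N
  · simp at ha hb; omega
  · rw [Nat.lt_succ_iff, lvl_le_iff, Nat.div_eq_of_lt ha, Nat.div_eq_of_lt hb]

theorem core_inc {ι : Type} (δ : ℕ → ℕ → ℕ) (hδ : Ultra δ) (T : ι → Finset ℕ) (s : ℕ)
    (hdis : ∀ i j, i ≠ j → ∀ x, x ∈ T i → x ∉ T j)
    (hcard : ∀ i, s + 1 ≤ (T i).card)
    (hinc : ∀ i j a b c, (a ∈ T i ∨ a ∈ T j) → (b ∈ T i ∨ b ∈ T j) → (c ∈ T i ∨ c ∈ T j) →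
      a < b → b < c → δ a b < δ b c) :
    ∃ S : ι → Finset ℕ, (∀ i, s ≤ (S i).card) ∧
      (∀ i j, i ≠ j → ∀ x, x ∈ S i → x ∉ S j) ∧
      (∀ i, ∀ d ∈ S i, ∃ x ∈ T i, ∃ y ∈ T i, x ≠ y ∧ δ x y = d) ∧
      ∀ i j, ∀ e : Finset ℕ, (∀ d ∈ e, d ∈ S i ∨ d ∈ S j) →
        ∃ e' : Finset ℕ, (∀ x ∈ e', x ∈ T i ∨ x ∈ T j) ∧ e'.card = e.card + 1 ∧
          (∀ d, d ∈ e ↔ ∃ x ∈ e', ∃ y ∈ e', x ≠ y ∧ δ x y = d) :=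
  core (α := ℕᵒᵈ) δ hδ.dual T s hdis hcard (by
    intro i j a b c ha hb hc hab hbc
    have := hinc i j c b a hc hb ha hbc hab
    rwa [hδ.symm c b, hδ.symm b a] at this)

theorem trim_inc {ι : Type} (δ : ℕ → ℕ → ℕ) (hδ : Ultra δ) (T : ι → Finset ℕ) (s : ℕ)
    (hcard : ∀ i, s + 2 ≤ (T i).card)
    (hinc : ∀ i a b c, a ∈ T i → b ∈ T i → c ∈ T i → a < b → b < c → δ a b < δ b c)
    (hfree : (∀ i j a b c d, (a ∈ T i ∨ a ∈ T j) → (b ∈ T i ∨ b ∈ T j) → (c ∈ T i ∨ c ∈ T j) →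
        (d ∈ T i ∨ d ∈ T j) → a < b → b < c → c < d → ¬ (δ b c < δ a b ∧ δ b c < δ c d)) ∨
      (∀ i j a b c d, (a ∈ T i ∨ a ∈ T j) → (b ∈ T i ∨ b ∈ T j) → (c ∈ T i ∨ c ∈ T j) →
        (d ∈ T i ∨ d ∈ T j) → a < b → b < c → c < d → ¬ (δ a b < δ b c ∧ δ c d < δ b c))) :
    ∃ T' : ι → Finset ℕ, (∀ i, T' i ⊆ T i) ∧ (∀ i, s ≤ (T' i).card) ∧
      (∀ i j a b c, (a ∈ T' i ∨ a ∈ T' j) → (b ∈ T' i ∨ b ∈ T' j) → (c ∈ T' i ∨ c ∈ T' j) →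
      a < b → b < c → δ a b < δ b c) := by
  obtain ⟨T', h1, h2, h3⟩ := trim (α := ℕᵒᵈ) δ hδ.dual T s hcard (by
      intro i a b c ha hb hc hab hbc
      have := hinc i c b a hc hb ha hbc hab
      rwa [hδ.symm c b, hδ.symm b a] at this)
    (by
      rcases hfree with h | h
      · left
        intro i j a b c d ha hb hc hd hab hbc hcd
        have := h i j d c b a hd hc hb ha hcd hbc hab
        rw [hδ.symm d c, hδ.symm c b, hδ.symm b a] at this
        exact fun h' => this ⟨h'.2, h'.1⟩
      · right
        intro i j a b c d ha hb hc hd hab hbc hcd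
        have := h i j d c b a hd hc hb ha hcd hbc hab
        rw [hδ.symm d c, hδ.symm c b, hδ.symm b a] at this
        exact fun h' => this ⟨h'.2, h'.1⟩)
  refine ⟨T', h1, h2, ?_⟩
  intro i j a b c ha hb hc hab hbc
  have := h3 i j c b a hc hb ha hbc hab
  rw [hδ.symm a b, hδ.symm b c]
  exact this

/-! ### Colourings without monochromatic blow-ups, and stepping up -/

/-- There is a `q`-colouring of the `k`-subsets of `{0, …, N-1}` with no `m` disjoint blocks of
size at least `s` such that all `k`-subsets of unions of two blocks have the same colour. -/
def Avoid (q k s m N : ℕ) : Prop :=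
  ∃ χ : Finset ℕ → ℕ, (∀ e, χ e < q) ∧ ∀ T : Fin m → Finset ℕ,
    (∀ i x, x ∈ T i → x < N) → (∀ i, s ≤ (T i).card) →
    (∀ i j, i ≠ j → ∀ x, x ∈ T i → x ∉ T j) → ∀ c,
    ¬ ∀ i j, ∀ e : Finset ℕ, (∀ x ∈ e, x ∈ T i ∨ x ∈ T j) → e.card = k → χ e = c

/-- The set of splitting levels of `e`. -/
def levels (e : Finset ℕ) : Finset ℕ :=
  ((e ×ˢ e).filter (fun p => p.1 ≠ p.2)).image (fun p => lvl p.1 p.2)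

theorem levels_eq (e e' : Finset ℕ)
    (h : ∀ d, d ∈ e ↔ ∃ x ∈ e', ∃ y ∈ e', x ≠ y ∧ lvl x y = d) : levels e' = e := by
  ext d
  rw [h]
  simp only [levels, Finset.mem_image, Finset.mem_filter, Finset.mem_product, Prod.exists]
  constructor
  · rintro ⟨x, y, ⟨⟨hx, hy⟩, hxy⟩, h⟩; exact ⟨x, hx, y, hy, hxy, h⟩
  · rintro ⟨x, hx, y, hy, hxy, h⟩; exact ⟨x, y, ⟨⟨hx, hy⟩, hxy⟩, h⟩

def DecB (X : Finset ℕ) : Prop :=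
  ∀ a b c, a ∈ X → b ∈ X → c ∈ X → a < b → b < c → lvl b c < lvl a b

def IncB (X : Finset ℕ) : Prop :=
  ∀ a b c, a ∈ X → b ∈ X → c ∈ X → a < b → b < c → lvl a b < lvl b c

theorem decB_triple (a b c : ℕ) (hab : a < b) (hbc : b < c) :
    DecB {a, b, c} ↔ lvl b c < lvl a b := by
  constructor
  · intro h
    exact h a b c (by simp) (by simp) (by simp) hab hbc
  · intro h x y z hx hy hz hxy hyz
    simp only [Finset.mem_insert, Finset.mem_singleton] at hx hy hz
    obtain rfl : x = a := by omega
    obtain rfl : y = b := by omega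
    obtain rfl : z = c := by omega
    exact h

theorem card_triple (a b c : ℕ) (hab : a < b) (hbc : b < c) :
    ({a, b, c} : Finset ℕ).card = 3 := by
  rw [Finset.card_eq_three]
  exact ⟨a, b, c, by omega, by omega, by omega, rfl⟩

theorem step3 (m N : ℕ) (hA : Avoid 2 2 1 m N) : Avoid 4 3 2 m (2 ^ N) := by
  classical
  obtain ⟨χ, hχ, hA⟩ := hA
  refine ⟨fun e => if DecB e then χ (levels e) else χ (levels e) + 2, ?_, ?_⟩
  · intro e
    have := hχ (levels e)
    dsimp only
    split_ifs <;> omega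
  intro T hT hcard hdis c hmono
  have hc : ∀ e, χ e < 2 := hχ
  have tri : ∀ i j x y z, (x ∈ T i ∨ x ∈ T j) → (y ∈ T i ∨ y ∈ T j) → (z ∈ T i ∨ z ∈ T j) →
      x < y → y < z → (if lvl y z < lvl x y then χ (levels {x, y, z})
        else χ (levels {x, y, z}) + 2) = c := by
    intro i j x y z hx hy hz hxy hyz
    have := hmono i j {x, y, z} (by
      intro w hw
      simp only [Finset.mem_insert, Finset.mem_singleton] at hw
      rcases hw with rfl | rfl | rfl <;> assumption) (card_triple x y z hxy hyz)
    simpa only [decB_triple x y z hxy hyz] using this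
  have fin : ∀ S : Fin m → Finset ℕ, (∀ i, 1 ≤ (S i).card) →
      (∀ i j, i ≠ j → ∀ x, x ∈ S i → x ∉ S j) →
      (∀ i, ∀ d ∈ S i, ∃ x ∈ T i, ∃ y ∈ T i, x ≠ y ∧ lvl x y = d) →
      (∀ i j, ∀ e : Finset ℕ, (∀ d ∈ e, d ∈ S i ∨ d ∈ S j) →
        ∃ e' : Finset ℕ, (∀ x ∈ e', x ∈ T i ∨ x ∈ T j) ∧ e'.card = e.card + 1 ∧
          (∀ d, d ∈ e ↔ ∃ x ∈ e', ∃ y ∈ e', x ≠ y ∧ lvl x y = d)) → False := by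
    intro S h1 h2 h3 h4
    refine hA S ?_ h1 h2 (if c < 2 then c else c - 2) ?_
    · intro i d hd
      obtain ⟨x, hx, y, hy, hxy, rfl⟩ := h3 i d hd
      exact lvl_lt x y N (hT i x hx) (hT i y hy) hxy
    · intro i j e he hec
      obtain ⟨e', he', hc', hl⟩ := h4 i j e he
      have h5 := hmono i j e' he' (by omega)
      dsimp only at h5
      rw [levels_eq e e' hl] at h5
      have := hc e
      split_ifs at h5 <;> split_ifs <;> omega
  by_cases hc2 : c < 2
  · obtain ⟨S, h1, h2, h3, h4⟩ := core lvl lvl_ultra T 1 hdis hcard (by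
      intro i j x y z hx hy hz hxy hyz
      have := tri i j x y z hx hy hz hxy hyz
      by_contra hcon
      rw [if_neg hcon] at this
      omega)
    exact fin S h1 h2 h3 h4
  · obtain ⟨S, h1, h2, h3, h4⟩ := core_inc lvl lvl_ultra T 1 hdis hcard (by
      intro i j x y z hx hy hz hxy hyz
      have := tri i j x y z hx hy hz hxy hyz
      have h1 := hc (levels {x, y, z})
      have h2 := lvl_ultra.ne x y z hxy hyz
      by_contra hcon
      rw [if_pos (by omega)] at this
      omega)
    exact fin S h1 h2 h3 h4

/-- The set starts with an increasing step of levels. -/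
def UpStart (e : Finset ℕ) : Prop :=
  ∃ a ∈ e, ∃ b ∈ e, ∃ c ∈ e, a < b ∧ b < c ∧ (∀ x ∈ e, x = a ∨ x = b ∨ c ≤ x) ∧
    lvl a b < lvl b c

theorem pigeon (m : ℕ) (d : Fin (2 * m) → Bool) :
    ∃ b, ∃ g : Fin m → Fin (2 * m), Function.Injective g ∧ ∀ i, d (g i) = b := by
  obtain ⟨b, -, hb⟩ := Finset.exists_le_card_fiber_of_mul_le_card_of_maps_to
      (s := (Finset.univ : Finset (Fin (2 * m)))) (t := (Finset.univ : Finset Bool))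
      (f := d) (n := m)
      (fun _ _ => Finset.mem_univ _) Finset.univ_nonempty (by simp)
  refine ⟨b, fun i => Finset.orderEmbOfCardLe _ hb i, (Finset.orderEmbOfCardLe _ hb).injective,
    fun i => ?_⟩
  have := Finset.orderEmbOfCardLe_mem _ hb i
  exact (Finset.mem_filter.mp this).2

theorem step (k : ℕ) (hk : 3 ≤ k) (s : ℕ) : ∃ s', ∀ m N, Avoid 4 k s m N →
    Avoid 4 (k+1) s' (2 * m) (2 ^ N) := by
  classical
  obtain ⟨R, hR⟩ := ramsey_fin 1 3 (s + 3)
  refine ⟨R + (k - 3), fun m N hA => ?_⟩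
  obtain ⟨χ, hχ, hA⟩ := hA
  let χ' : Finset ℕ → ℕ := fun e =>
    if DecB e ∨ IncB e then χ (levels e) else if UpStart e then 0 else 1
  refine ⟨χ', ?_, ?_⟩
  · intro e
    have := hχ (levels e)
    simp only [χ']
    split_ifs <;> omega
  intro T hT hcard hdis c hmono
  -- leave room at the top of each block
  choose T1 hT1 hT1c hT1Z using fun i => drop_top (k - 3) (T i)
  -- extend a quadruple to an edge
  have ext : ∀ i j x y z w, (x ∈ T1 i ∨ x ∈ T1 j) → (y ∈ T1 i ∨ y ∈ T1 j) →
      (z ∈ T1 i ∨ z ∈ T1 j) → (w ∈ T1 i ∨ w ∈ T1 j) → x < y → y < z → z < w →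
      ∃ e : Finset ℕ, x ∈ e ∧ y ∈ e ∧ z ∈ e ∧ w ∈ e ∧
        (∀ v ∈ e, v = x ∨ v = y ∨ v = z ∨ w ≤ v) ∧ χ' e = c := by
    intro i j x y z w hx hy hz hw hxy hyz hzw
    have sub : ∀ v, (v ∈ T1 i ∨ v ∈ T1 j) → (v ∈ T i ∨ v ∈ T j) :=
      fun v hv => hv.imp (fun h => hT1 i h) (fun h => hT1 j h)
    have : ∃ Z : Finset ℕ, (∀ v ∈ Z, v ∈ T i ∨ v ∈ T j) ∧ Z.card = k - 3 ∧ ∀ v ∈ Z, w < v := by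
      rcases hw with hw | hw
      · obtain ⟨Z, h1, h2, h3⟩ := hT1Z i w hw
        exact ⟨Z, fun v hv => .inl (h1 hv), h2, h3⟩
      · obtain ⟨Z, h1, h2, h3⟩ := hT1Z j w hw
        exact ⟨Z, fun v hv => .inr (h1 hv), h2, h3⟩
    obtain ⟨Z, h1, h2, h3⟩ := this
    refine ⟨insert x (insert y (insert z (insert w Z))), by simp, by simp, by simp, by simp,
      ?_, ?_⟩
    · intro v hv
      simp only [Finset.mem_insert] at hv
      rcases hv with h | h | h | h | h
      · exact .inl h
      · exact .inr (.inl h)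
      · exact .inr (.inr (.inl h))
      · exact .inr (.inr (.inr h.ge))
      · exact .inr (.inr (.inr (h3 v h).le))
    · apply hmono i j
      · intro v hv
        simp only [Finset.mem_insert] at hv
        rcases hv with rfl | rfl | rfl | rfl | h
        · exact sub _ hx
        · exact sub _ hy
        · exact sub _ hz
        · exact sub _ hw
        · exact h1 v h
      · have nw : w ∉ Z := fun h => lt_irrefl _ (h3 w h)
        have nz : z ∉ insert w Z := by
          rw [Finset.mem_insert]; rintro (h | h)
          · omega
          · have := h3 z h; omega
        have ny : y ∉ insert z (insert w Z) := by
          rw [Finset.mem_insert, Finset.mem_insert]; rintro (h | h | h)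
          · omega
          · omega
          · have := h3 y h; omega
        have nx : x ∉ insert y (insert z (insert w Z)) := by
          rw [Finset.mem_insert, Finset.mem_insert, Finset.mem_insert]; rintro (h | h | h | h)
          · omega
          · omega
          · omega
          · have := h3 x h; omega
        rw [Finset.card_insert_of_notMem nx, Finset.card_insert_of_notMem ny,
          Finset.card_insert_of_notMem nz, Finset.card_insert_of_notMem nw, h2]
        omega
  have hfree : (∀ i j a b c d, (a ∈ T1 i ∨ a ∈ T1 j) → (b ∈ T1 i ∨ b ∈ T1 j) →
        (c ∈ T1 i ∨ c ∈ T1 j) → (d ∈ T1 i ∨ d ∈ T1 j) → a < b → b < c → c < d →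
        ¬ (lvl b c < lvl a b ∧ lvl b c < lvl c d)) ∨
      (∀ i j a b c d, (a ∈ T1 i ∨ a ∈ T1 j) → (b ∈ T1 i ∨ b ∈ T1 j) →
        (c ∈ T1 i ∨ c ∈ T1 j) → (d ∈ T1 i ∨ d ∈ T1 j) → a < b → b < c → c < d →
        ¬ (lvl a b < lvl b c ∧ lvl c d < lvl b c)) := by
    by_cases hc1 : c = 0
    · left
      rintro i j x y z w hx hy hz hw hxy hyz hzw ⟨h1, h2⟩
      obtain ⟨e, ex, ey, ez, ew, hv, hce⟩ := ext i j x y z w hx hy hz hw hxy hyz hzw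
      have n1 : ¬ (DecB e ∨ IncB e) := by
        rintro (h | h)
        · have := h y z w ey ez ew hyz hzw; omega
        · have := h x y z ex ey ez hxy hyz; omega
      have n2 : ¬ UpStart e := by
        rintro ⟨a, ha, b, hb, d, hd, hab, hbd, hall, hl⟩
        have e1 := hall x ex
        have e2 := hall y ey
        have e3 := hall z ez
        have e4 := hv a ha
        have e5 := hv b hb
        have e6 := hv d hd
        obtain rfl : a = x := by omega
        obtain rfl : b = y := by omega
        obtain rfl : d = z := by omega
        omega
      simp only [χ', if_neg n1, if_neg n2] at hce
      omega
    · right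
      rintro i j x y z w hx hy hz hw hxy hyz hzw ⟨h1, h2⟩
      obtain ⟨e, ex, ey, ez, ew, hv, hce⟩ := ext i j x y z w hx hy hz hw hxy hyz hzw
      have n1 : ¬ (DecB e ∨ IncB e) := by
        rintro (h | h)
        · have := h x y z ex ey ez hxy hyz; omega
        · have := h y z w ey ez ew hyz hzw; omega
      have n2 : UpStart e := by
        refine ⟨x, ex, y, ey, z, ez, hxy, hyz, ?_, h1⟩
        intro v hve
        have := hv v hve
        omega
      simp only [χ', if_neg n1, if_pos n2] at hce
      omega
  -- Ramsey inside each block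
  have hram : ∀ i, ∃ Y ⊆ T1 i, s + 3 ≤ Y.card ∧ (DecB Y ∨ IncB Y) := by
    intro i
    obtain ⟨Y, hY, hYc, col, hcol⟩ := hR ℕ (fun e => if DecB e then 0 else 1) (T1 i) (by
      have := hT1c i; have := hcard i; omega)
    refine ⟨Y, hY, hYc, ?_⟩
    have tri : ∀ x y z, x ∈ Y → y ∈ Y → z ∈ Y → x < y → y < z →
        (if lvl y z < lvl x y then (0 : Fin 2) else 1) = col := by
      intro x y z hx hy hz hxy hyz
      have := hcol {x, y, z} (by
        intro w hw
        simp only [Finset.mem_insert, Finset.mem_singleton] at hw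
        rcases hw with rfl | rfl | rfl <;> assumption) (card_triple x y z hxy hyz)
      simpa only [decB_triple x y z hxy hyz] using this
    by_cases h0 : col = 0
    · left
      intro x y z hx hy hz hxy hyz
      have h := tri x y z hx hy hz hxy hyz
      by_contra hcon
      rw [if_neg hcon, h0] at h
      exact absurd h (by decide)
    · right
      intro x y z hx hy hz hxy hyz
      have h := tri x y z hx hy hz hxy hyz
      have h2 := lvl_ultra.ne x y z hxy hyz
      by_contra hcon
      rw [if_pos (by omega)] at h
      exact h0 h.symm
  choose T2 hT2 hT2c hT2m using hram
  obtain ⟨b, g, hg, hgb⟩ := pigeon m (fun i => decide (DecB (T2 i)))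
  have sub : ∀ i j v, (v ∈ T2 (g i) ∨ v ∈ T2 (g j)) → (v ∈ T1 (g i) ∨ v ∈ T1 (g j)) :=
      fun i j v hv => hv.imp (fun h => hT2 _ h) (fun h => hT2 _ h)
  have hfree2 : (∀ i j a b c d, (a ∈ T2 (g i) ∨ a ∈ T2 (g j)) → (b ∈ T2 (g i) ∨ b ∈ T2 (g j)) →
        (c ∈ T2 (g i) ∨ c ∈ T2 (g j)) → (d ∈ T2 (g i) ∨ d ∈ T2 (g j)) → a < b → b < c → c < d →
        ¬ (lvl b c < lvl a b ∧ lvl b c < lvl c d)) ∨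
      (∀ i j a b c d, (a ∈ T2 (g i) ∨ a ∈ T2 (g j)) → (b ∈ T2 (g i) ∨ b ∈ T2 (g j)) →
        (c ∈ T2 (g i) ∨ c ∈ T2 (g j)) → (d ∈ T2 (g i) ∨ d ∈ T2 (g j)) → a < b → b < c → c < d →
        ¬ (lvl a b < lvl b c ∧ lvl c d < lvl b c)) := by
    rcases hfree with h | h
    · left
      intro i j x y z w hx hy hz hw
      exact h (g i) (g j) x y z w (sub i j x hx) (sub i j y hy) (sub i j z hz) (sub i j w hw)
    · right
      intro i j x y z w hx hy hz hw
      exact h (g i) (g j) x y z w (sub i j x hx) (sub i j y hy) (sub i j z hz) (sub i j w hw)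
  have fin : ∀ T' : Fin m → Finset ℕ, (∀ i, T' i ⊆ T2 (g i)) →
      (∀ i j, ∀ e : Finset ℕ, (∀ x ∈ e, x ∈ T' i ∨ x ∈ T' j) → DecB e ∨ IncB e) →
      ∀ S : Fin m → Finset ℕ, (∀ i, s ≤ (S i).card) →
      (∀ i j, i ≠ j → ∀ x, x ∈ S i → x ∉ S j) →
      (∀ i, ∀ d ∈ S i, ∃ x ∈ T' i, ∃ y ∈ T' i, x ≠ y ∧ lvl x y = d) →
      (∀ i j, ∀ e : Finset ℕ, (∀ d ∈ e, d ∈ S i ∨ d ∈ S j) →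
        ∃ e' : Finset ℕ, (∀ x ∈ e', x ∈ T' i ∨ x ∈ T' j) ∧ e'.card = e.card + 1 ∧
          (∀ d, d ∈ e ↔ ∃ x ∈ e', ∃ y ∈ e', x ≠ y ∧ lvl x y = d)) → False := by
    intro T' hT' hmon S h1 h2 h3 h4
    have hsub : ∀ i x, x ∈ T' i → x ∈ T (g i) := fun i x hx => hT1 _ (hT2 _ (hT' i hx))
    refine hA S ?_ h1 h2 c ?_
    · intro i d hd
      obtain ⟨x, hx, y, hy, hxy, rfl⟩ := h3 i d hd
      exact lvl_lt x y N (hT _ x (hsub i x hx)) (hT _ y (hsub i y hy)) hxy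
    · intro i j e he hec
      obtain ⟨e', he', hc', hl⟩ := h4 i j e he
      have h5 := hmono (g i) (g j) e'
        (fun x hx => (he' x hx).imp (hsub i x) (hsub j x)) (by omega)
      simp only [χ', if_pos (hmon i j e' he')] at h5
      rwa [levels_eq e e' hl] at h5
  have hdis' : ∀ T' : Fin m → Finset ℕ, (∀ i, T' i ⊆ T2 (g i)) →
      ∀ i j, i ≠ j → ∀ x, x ∈ T' i → x ∉ T' j := by
    intro T' hT' i j hij x hx hx'
    exact hdis (g i) (g j) (fun h => hij (hg h)) x (hT1 _ (hT2 _ (hT' i hx)))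
      (hT1 _ (hT2 _ (hT' j hx')))
  have hc2 : ∀ i, (s + 1) + 2 ≤ (T2 (g i)).card := fun i => hT2c (g i)
  cases b with
  | true =>
    obtain ⟨T', h1, h2, h3⟩ := trim lvl lvl_ultra (fun i => T2 (g i)) (s+1) hc2
      (fun i => of_decide_eq_true (hgb i)) hfree2
    obtain ⟨S, g1, g2, g3, g4⟩ := core lvl lvl_ultra T' s (hdis' T' h1) h2 h3
    refine fin T' h1 ?_ S g1 g2 g3 g4
    intro i j e he
    left
    intro x y z hx hy hz
    exact h3 i j x y z (he x hx) (he y hy) (he z hz)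
  | false =>
    obtain ⟨T', h1, h2, h3⟩ := trim_inc lvl lvl_ultra (fun i => T2 (g i)) (s+1) hc2
      (fun i => (hT2m (g i)).resolve_left (of_decide_eq_false (hgb i))) hfree2
    obtain ⟨S, g1, g2, g3, g4⟩ := core_inc lvl lvl_ultra T' s (hdis' T' h1) h2 h3
    refine fin T' h1 ?_ S g1 g2 g3 g4
    intro i j e he
    right
    intro x y z hx hy hz
    exact h3 i j x y z (he x hx) (he y hy) (he z hz)

/-! ### The base case: Erdős' lower bound for graphs -/

theorem base (t : ℕ) (ht : 1 ≤ t) : Avoid 2 2 1 (4 * t) (2 ^ t) := by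
  classical
  set N := 2 ^ t with hN
  set m := 4 * t with hm
  let P := (Finset.range N).powersetCard 2
  let bad : Finset ℕ × Bool → Finset (P → Bool) := fun Sc =>
    Fintype.piFinset (fun e : P => if e.1 ⊆ Sc.1 then {Sc.2} else Finset.univ)
  have hbad : ∀ Sc ∈ ((Finset.range N).powersetCard m) ×ˢ (Finset.univ : Finset Bool),
      (bad Sc).card * 2 ^ (m.choose 2) = 2 ^ P.card := by
    rintro ⟨S, c⟩ hS
    have hS := Finset.mem_powersetCard.mp (Finset.mem_product.mp hS).1
    have h1 : (bad (S, c)).card =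
        ∏ e : P, if e.1 ⊆ S then 1 else 2 := by
      simp only [bad, Fintype.card_piFinset]
      apply Finset.prod_congr rfl
      intro e _
      split_ifs <;> simp
    have h2 : (∏ e : P, if e.1 ⊆ S then 1 else 2) = ∏ e ∈ P, if e ⊆ S then 1 else 2 :=
      Finset.prod_coe_sort P (fun e => if e ⊆ S then 1 else 2)
    have h3 : (P.filter (fun e => e ⊆ S)) = S.powersetCard 2 := by
      ext e
      simp only [P, Finset.mem_filter, Finset.mem_powersetCard]
      constructor
      · rintro ⟨⟨_, h⟩, h'⟩; exact ⟨h', h⟩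
      · rintro ⟨h, h'⟩; exact ⟨⟨h.trans hS.1, h'⟩, h⟩
    have h4 := Finset.card_filter_add_card_filter_not (s := P) (fun e => e ⊆ S)
    rw [h3, Finset.card_powersetCard, hS.2] at h4
    rw [h1, h2, Finset.prod_ite]
    simp only [Finset.prod_const, one_pow, one_mul]
    rw [← pow_add, ← h4, add_comm]
  have hlt : (((Finset.range N).powersetCard m ×ˢ (Finset.univ : Finset Bool)).biUnion bad).card
      < Fintype.card (P → Bool) := by
    have hU := Finset.card_biUnion_le
      (s := (Finset.range N).powersetCard m ×ˢ (Finset.univ : Finset Bool)) (t := bad)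
    have hs : (∑ Sc ∈ (Finset.range N).powersetCard m ×ˢ (Finset.univ : Finset Bool),
        (bad Sc).card) * 2 ^ (m.choose 2) = (N.choose m * 2) * 2 ^ P.card := by
      rw [Finset.sum_mul, Finset.sum_congr rfl hbad]
      simp
    have hch : N.choose m * 2 < 2 ^ (m.choose 2) := by
      have e1 : N.choose m ≤ N ^ m := Nat.choose_le_pow _ _
      have e2 : N ^ m * 2 = 2 ^ (t * (4 * t) + 1) := by
        rw [hN, hm, ← pow_mul, pow_succ]
      have e3 : m.choose 2 = 2 * t * (4 * t - 1) := by
        rw [Nat.choose_two_right, hm]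
        have : 4 * t * (4 * t - 1) = 2 * (2 * t * (4 * t - 1)) := by ring
        rw [this, Nat.mul_div_cancel_left _ (by norm_num)]
      have e4 : t * (4 * t) + 1 < m.choose 2 := by
        rw [e3]
        obtain ⟨u, rfl⟩ := Nat.exists_eq_add_of_le ht
        have : 4 * (1 + u) - 1 = 4 * u + 3 := by omega
        rw [this]
        nlinarith
      calc N.choose m * 2 ≤ N ^ m * 2 := Nat.mul_le_mul_right _ e1
        _ = _ := e2
        _ < _ := Nat.pow_lt_pow_right (by norm_num) e4
    have hcard : Fintype.card (P → Bool) = 2 ^ P.card := by simp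
    rw [hcard]
    refine lt_of_le_of_lt hU ?_
    have hp : 0 < 2 ^ P.card := by positivity
    have h5 : (N.choose m * 2) * 2 ^ P.card < 2 ^ P.card * 2 ^ (m.choose 2) := by
      rw [mul_comm (2 ^ P.card)]
      exact Nat.mul_lt_mul_of_pos_right hch hp
    rw [← hs] at h5
    exact lt_of_mul_lt_mul_right h5 (Nat.zero_le _)
  obtain ⟨f, hf⟩ : ∃ f, f ∉ ((Finset.range N).powersetCard m ×ˢ
      (Finset.univ : Finset Bool)).biUnion bad := by
    by_contra hcon
    push Not at hcon
    rw [(Finset.eq_univ_iff_forall.mpr hcon), Finset.card_univ] at hlt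
    exact lt_irrefl _ hlt
  refine ⟨fun e => if h : e ∈ P then (f ⟨e, h⟩).toNat else 0, ?_, ?_⟩
  · intro e
    dsimp only
    split_ifs with h
    · exact Bool.toNat_lt _
    · norm_num
  · intro T hT hcard hdis c hmono
    have hne : ∀ i, (T i).Nonempty := fun i => Finset.card_pos.mp (hcard i)
    choose v hv using hne
    have hinj : Function.Injective v := by
      intro i j h
      by_contra hij
      exact hdis i j hij (v i) (hv i) (h ▸ hv j)
    let S := Finset.univ.image v
    have hS : S ∈ (Finset.range N).powersetCard m := by
      rw [Finset.mem_powersetCard]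
      constructor
      · intro x hx
        obtain ⟨i, -, rfl⟩ := Finset.mem_image.mp hx
        exact Finset.mem_range.mpr (hT i _ (hv i))
      · rw [Finset.card_image_of_injective _ hinj]; simp
    apply hf
    rw [Finset.mem_biUnion]
    refine ⟨(S, decide (c = 1)), Finset.mem_product.mpr ⟨hS, Finset.mem_univ _⟩, ?_⟩
    rw [Fintype.mem_piFinset]
    intro e
    split_ifs with h
    · rw [Finset.mem_singleton]
      have he := Finset.mem_powersetCard.mp e.2
      obtain ⟨x, y, hxy, hexy⟩ := Finset.card_eq_two.mp he.2
      have hx : x ∈ S := h (by rw [hexy]; simp)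
      have hy : y ∈ S := h (by rw [hexy]; simp)
      obtain ⟨i, -, hi⟩ := Finset.mem_image.mp hx
      obtain ⟨j, -, hj⟩ := Finset.mem_image.mp hy
      have h6 := hmono i j e.1 (by
        intro z hz
        rw [hexy] at hz
        simp only [Finset.mem_insert, Finset.mem_singleton] at hz
        rcases hz with rfl | rfl
        · left; rw [← hi]; exact hv i
        · right; rw [← hj]; exact hv j) he.2
      dsimp only at h6
      rw [dif_pos e.2] at h6
      subst h6
      have : (⟨e.1, e.2⟩ : P) = e := rfl
      rw [this]
      cases f e <;> simp
    · exact Finset.mem_univ _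

/-! ### Assembling everything -/

/-- The tower function on natural numbers. -/
def twN : ℕ → ℕ → ℕ
  | 0, x => x
  | 1, x => x
  | (k + 2), x => 2 ^ twN (k + 1) x

theorem twR_eq (k t : ℕ) : twR k (t : ℝ) = (twN k t : ℝ) := by
  induction k with
  | zero => rfl
  | succ k ih =>
    cases k with
    | zero => rfl
    | succ k =>
      simp only [twR, twN]
      rw [ih, Real.rpow_natCast]
      push_cast
      rfl

theorem twR_mono (k : ℕ) : Monotone (twR k) := by
  induction k with
  | zero => exact fun x y h => h
  | succ k ih =>
    cases k with
    | zero => exact fun x y h => h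
    | succ k =>
      intro x y h
      simp only [twR]
      exact Real.rpow_le_rpow_of_exponent_le (by norm_num) (ih h)

theorem Avoid.mono_q {q q' k s m N : ℕ} (h : Avoid q k s m N) (hq : q ≤ q') :
    Avoid q' k s m N := by
  obtain ⟨χ, h1, h2⟩ := h
  exact ⟨χ, fun e => (h1 e).trans_le hq, h2⟩

theorem Avoid.mono_s {q k s s' m N : ℕ} (h : Avoid q k s m N) (hs : s ≤ s') :
    Avoid q k s' m N := by
  obtain ⟨χ, h1, h2⟩ := h
  exact ⟨χ, h1, fun T a b => h2 T a (fun i => hs.trans (b i))⟩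

theorem avoid_all (k : ℕ) (hk : 2 ≤ k) : ∃ s M : ℕ, 0 < s ∧ 0 < M ∧
    ∀ t, 1 ≤ t → Avoid 4 k s (M * t) (twN k t) := by
  rcases Nat.eq_or_lt_of_le hk with rfl | hk3
  · exact ⟨1, 4, by norm_num, by norm_num, fun t ht => (base t ht).mono_q (by norm_num)⟩
  · clear hk
    have hk4 : 3 ≤ k := hk3
    clear hk3
    induction k, hk4 using Nat.le_induction with
    | base => exact ⟨2, 4, by norm_num, by norm_num, fun t ht => step3 _ _ (base t ht)⟩
    | succ k hk ih =>
      obtain ⟨s, M, hs, hM, h⟩ := ih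
      obtain ⟨s', hs'⟩ := step k hk s
      refine ⟨s' + 1, 2 * M, by omega, by omega, fun t ht => ?_⟩
      have h1 := (hs' _ _ (h t ht)).mono_s (Nat.le_succ s')
      have h2 : twN (k + 1) t = 2 ^ twN k t := by
        obtain ⟨r, rfl⟩ := Nat.exists_eq_add_of_le' (show 1 ≤ k by omega)
        rfl
      rw [h2, mul_assoc]
      exact h1

theorem arrows_exists (k n : ℕ) (E : Finset (Finset (Fin n))) (hE : ∀ e ∈ E, e.card = k) :
    ∃ N, arrowsProp n N 4 E := by
  obtain ⟨N, hN⟩ := ramsey_fin 3 k n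
  refine ⟨N, fun χ => ?_⟩
  obtain ⟨Y, -, hYc, c, hc⟩ := hN (Fin N) χ Finset.univ (by simp)
  refine ⟨(Finset.orderEmbOfCardLe Y hYc).toEmbedding, c, fun e he => ?_⟩
  apply hc
  · intro x hx
    obtain ⟨y, -, rfl⟩ := Finset.mem_map.mp hx
    exact Finset.orderEmbOfCardLe_mem Y hYc y
  · rw [Finset.card_map, hE e he]

theorem block_le (n s j : ℕ) (hs : 0 < s) :
    ((Finset.univ : Finset (Fin n)).filter (fun x => x.1 / s = j)).card ≤ s := by
  have h : ((Finset.univ : Finset (Fin n)).filter (fun x => x.1 / s = j)).card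
      ≤ (Finset.Ico (j * s) (j * s + s)).card := by
    apply Finset.card_le_card_of_injOn (fun x => x.1)
    · intro x hx
      have hx : x.1 / s = j := by simpa using hx
      have h1 := Nat.div_add_mod x.1 s
      have h2 := Nat.mod_lt x.1 hs
      rw [hx, mul_comm] at h1
      simp only [Finset.coe_Ico, Set.mem_Ico]
      omega
    · exact fun x _ y _ h => Fin.ext h
  simpa using h

theorem le_block (n s j : ℕ) (hs : 0 < s) (hj : j * s + s ≤ n) :
    s ≤ ((Finset.univ : Finset (Fin n)).filter (fun x => x.1 / s = j)).card := by
  have h : (Finset.univ : Finset (Fin s)).card ≤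
      ((Finset.univ : Finset (Fin n)).filter (fun x => x.1 / s = j)).card := by
    apply Finset.card_le_card_of_injOn
      (fun r : Fin s => (⟨j * s + r.1, by have := r.2; omega⟩ : Fin n))
    · intro r _
      simp only [Finset.coe_filter, Finset.mem_univ, true_and, Set.mem_ofPred_eq]
      rw [mul_comm, Nat.mul_add_div hs, Nat.div_eq_of_lt r.2, add_zero]
    · intro x _ y _ h
      have := congrArg Fin.val h
      simp only at this
      exact Fin.ext (by omega)
  simpa using h

/-- The blow-up hypergraph: all `k`-subsets of unions of two blocks of size `s`. -/
def blowEdges (n k s : ℕ) : Finset (Finset (Fin n)) :=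
  open Classical in
  Finset.univ.filter (fun e => e.card = k ∧ ∃ i j : Fin n, ∀ x ∈ e, x.1 / s = i.1 ∨ x.1 / s = j.1)

theorem mem_blowEdges (n k s : ℕ) (e : Finset (Fin n)) : e ∈ blowEdges n k s ↔
    e.card = k ∧ ∃ i j : Fin n, ∀ x ∈ e, x.1 / s = i.1 ∨ x.1 / s = j.1 := by
  simp [blowEdges]

theorem blow_degree (n k s : ℕ) (hs : 0 < s) (v : Fin n) :
    ((blowEdges n k s).filter fun e => v ∈ e).card ≤ 4 ^ s * n := by
  have hsub : ((blowEdges n k s).filter fun e => v ∈ e) ⊆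
      (Finset.univ : Finset (Fin n)).biUnion (fun j =>
        (Finset.univ.filter (fun x : Fin n => x.1 / s = v.1 / s) ∪
          Finset.univ.filter (fun x : Fin n => x.1 / s = j.1)).powerset) := by
    intro e he
    rw [Finset.mem_filter, mem_blowEdges] at he
    obtain ⟨⟨-, i, j, hij⟩, hv⟩ := he
    rw [Finset.mem_biUnion]
    rcases hij v hv with h | h
    · refine ⟨j, Finset.mem_univ _, Finset.mem_powerset.mpr fun x hx => ?_⟩
      simp only [Finset.mem_union, Finset.mem_filter, Finset.mem_univ, true_and]
      rw [h]
      exact hij x hx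
    · refine ⟨i, Finset.mem_univ _, Finset.mem_powerset.mpr fun x hx => ?_⟩
      simp only [Finset.mem_union, Finset.mem_filter, Finset.mem_univ, true_and]
      rw [h]
      exact (hij x hx).symm
  refine (Finset.card_le_card hsub).trans ?_
  refine (Finset.card_biUnion_le_card_mul _ _ (4 ^ s) ?_).trans ?_
  · intro j _
    rw [Finset.card_powerset, show (4 : ℕ) = 2 ^ 2 by norm_num, ← pow_mul]
    apply Nat.pow_le_pow_right (by norm_num)
    refine (Finset.card_union_le _ _).trans ?_
    have h1 := block_le n s (v.1 / s) hs
    have h2 := block_le n s j.1 hs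
    omega
  · simp [mul_comm]

theorem not_arrows (n k s m N N' : ℕ) (hs : 0 < s) (hm : s * m ≤ n) (hA : Avoid 4 k s m N)
    (hN : N' ≤ N) : ¬ arrowsProp n N' 4 (blowEdges n k s) := by
  classical
  obtain ⟨χ, hχ, hA⟩ := hA
  intro harr
  obtain ⟨f, c, hf⟩ := harr (fun e => ⟨χ (e.map Fin.valEmbedding), hχ _⟩)
  let F : Fin n ↪ ℕ := f.trans Fin.valEmbedding
  refine hA (fun j => (Finset.univ.filter (fun x : Fin n => x.1 / s = j.1)).map F) ?_ ?_ ?_ c.1 ?_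
  · intro i x hx
    obtain ⟨y, -, rfl⟩ := Finset.mem_map.mp hx
    exact lt_of_lt_of_le (f y).2 hN
  · intro j
    rw [Finset.card_map]
    apply le_block n s j.1 hs
    have : s * (j.1 + 1) ≤ s * m := Nat.mul_le_mul_left _ j.2
    have e : s * (j.1 + 1) = j.1 * s + s := by ring
    omega
  · intro i j hij x hx hx'
    obtain ⟨y, hy, rfl⟩ := Finset.mem_map.mp hx
    obtain ⟨z, hz, h⟩ := Finset.mem_map.mp hx'
    have := F.injective h
    subst this
    simp only [Finset.mem_filter, Finset.mem_univ, true_and] at hy hz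
    exact hij (Fin.ext (hy.symm.trans hz))
  · intro i j e he hec
    have hmn : m ≤ n := le_trans (Nat.le_mul_of_pos_left m hs) hm
    let e0 : Finset (Fin n) := Finset.univ.filter (fun x => F x ∈ e)
    have hmap : e0.map F = e := by
      ext x
      rw [Finset.mem_map]
      constructor
      · rintro ⟨y, hy, rfl⟩
        exact (Finset.mem_filter.mp hy).2
      · intro hx
        have : ∃ y, F y = x := by
          rcases he x hx with h | h
          · obtain ⟨y, -, h⟩ := Finset.mem_map.mp h; exact ⟨y, h⟩
          · obtain ⟨y, -, h⟩ := Finset.mem_map.mp h; exact ⟨y, h⟩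
        obtain ⟨y, rfl⟩ := this
        exact ⟨y, Finset.mem_filter.mpr ⟨Finset.mem_univ _, hx⟩, rfl⟩
    have hmem : e0 ∈ blowEdges n k s := by
      rw [mem_blowEdges]
      refine ⟨by rw [← hec, ← hmap, Finset.card_map], ⟨i.1, i.2.trans_le hmn⟩,
        ⟨j.1, j.2.trans_le hmn⟩, fun x hx => ?_⟩
      have hx := (Finset.mem_filter.mp hx).2
      rcases he _ hx with h | h
      · left
        obtain ⟨y, hy, h⟩ := Finset.mem_map.mp h
        have := F.injective h
        subst this
        exact (Finset.mem_filter.mp hy).2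
      · right
        obtain ⟨y, hy, h⟩ := Finset.mem_map.mp h
        have := F.injective h
        subst this
        exact (Finset.mem_filter.mp hy).2
    have := congrArg Fin.val (hf e0 hmem)
    simp only [Finset.map_map] at this
    rw [← this, ← hmap]

/-- For any `k ≥ 2`, there is a constant `C_k` such that for any `n ≥ C_k`, there exists a
`k`-uniform `n`-vertex hypergraph with maximum degree at most `C_k·n` whose `4`-color
Ramsey number is at least `tw_k(n/C_k)`. -/
theorem stmt_1 (k : ℕ) (hk : 2 ≤ k) :
    ∃ C : ℝ, 0 < C ∧ ∀ n : ℕ, C ≤ (n : ℝ) →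
      ∃ E : Finset (Finset (Fin n)),
        (∀ e ∈ E, e.card = k) ∧
        (∀ v : Fin n, ((E.filter fun e => v ∈ e).card : ℝ) ≤ C * (n : ℝ)) ∧
        twR k ((n : ℝ) / C) ≤ (ramseyNumber n 4 E : ℝ) := by
  obtain ⟨s, M, hs, hM, hA⟩ := avoid_all k hk
  have hsM : 0 < s * M := Nat.mul_pos hs hM
  have hsM' : (0 : ℝ) < (s * M : ℕ) := by exact_mod_cast hsM
  refine ⟨max (2 * ((s * M : ℕ) : ℝ)) (4 ^ s), lt_max_of_lt_right (by positivity), fun n hn => ?_⟩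
  have hE : ∀ e ∈ blowEdges n k s, e.card = k := fun e he => ((mem_blowEdges n k s e).mp he).1
  have hn1 : 2 * ((s * M : ℕ) : ℝ) ≤ n := (le_max_left _ _).trans hn
  have hn2 : 2 * (s * M) ≤ n := by exact_mod_cast hn1
  refine ⟨blowEdges n k s, hE, fun v => ?_, ?_⟩
  · have h1 : (((blowEdges n k s).filter fun e => v ∈ e).card : ℝ) ≤ 4 ^ s * n := by
      exact_mod_cast blow_degree n k s hs v
    exact h1.trans (mul_le_mul_of_nonneg_right (le_max_right _ _) (Nat.cast_nonneg _))
  · set t := n / (s * M) with ht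
    have ht1 : 1 ≤ t := (Nat.one_le_div_iff hsM).mpr (by omega)
    have hlow : twN k t ≤ ramseyNumber n 4 (blowEdges n k s) := by
      apply le_csInf
      · exact arrows_exists k n _ hE
      · intro N' hN'
        by_contra hcon
        refine not_arrows n k s (M * t) (twN k t) N' hs ?_ (hA t ht1) (by omega) hN'
        rw [← mul_assoc]
        exact Nat.mul_div_le n (s * M)
    have hdiv : (n : ℝ) / max (2 * ((s * M : ℕ) : ℝ)) (4 ^ s) ≤ (t : ℝ) := by
      have h1 : (n : ℝ) / max (2 * ((s * M : ℕ) : ℝ)) (4 ^ s) ≤ n / (2 * ((s * M : ℕ) : ℝ)) :=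
        div_le_div_of_nonneg_left (Nat.cast_nonneg _) (by positivity) (le_max_left _ _)
      refine h1.trans ?_
      rw [div_le_iff₀ (by positivity)]
      have h2 : n < s * M * (t + 1) := Nat.lt_mul_div_succ n hsM
      have h3 : n ≤ t * (2 * (s * M)) := by
        have : s * M * (t + 1) ≤ t * (2 * (s * M)) := by nlinarith
        omega
      exact_mod_cast h3
    calc twR k ((n : ℝ) / max (2 * ((s * M : ℕ) : ℝ)) (4 ^ s)) ≤ twR k t := twR_mono k hdiv
      _ = (twN k t : ℝ) := twR_eq k t
      _ ≤ _ := by exact_mod_cast hlow
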